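/- Let n ≥ 2, 1/2 < s < 1, and let L, C, η₀ > 0. Let u : ℝⁿ → ℝ be Lipschitz with constant L and semiconcave with constant C, and suppose u satisfies the ellipticity bound η₀ at a point x ∈ ℝⁿ. Then for every unit vector e ∈ ℝⁿ, the function t ↦ δ(u,x,te)/|t|^{1+2s} is Lebesgue integrable on ℝ and μ₀ ≤ (1−s)·(1/2)·∫_ℝ δ(u,x,te)/|t|^{1+2s} dt ≤ μ₁. -/

import Mathlib

open MeasureTheory

noncomputable def surfOmega (k : ℕ) : ℝ := 2 * Real.pi ^ ((k : ℝ) / 2) / Real.Gamma ((k : ℝ) / 2)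

noncomputable def mu1 (s L C : ℝ) : ℝ := L ^ (2 - 2 * s) * (C / 2) ^ (2 * s - 1) / (2 * s - 1)

noncomputable def C1 (n : ℕ) (s L C : ℝ) : ℝ :=
  (Real.sqrt Real.pi * Real.Gamma (((n : ℝ) - 1) / 2 + s) / Real.Gamma ((n : ℝ) / 2 + s)) *
    (mu1 s L C * surfOmega (n - 1) / 2)

noncomputable def C2 (n : ℕ) (s : ℝ) : ℝ :=
  surfOmega (n - 1) * Real.Gamma (((n : ℝ) - 1) / 2) * Real.Gamma (s + 1 / 2) /
    (2 * Real.Gamma ((n : ℝ) / 2 + s))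

noncomputable def mu0 (n : ℕ) (s L C η₀ : ℝ) : ℝ :=
  C1 n s L C ^ (1 - (n : ℝ)) * (C2 n s)⁻¹ * (η₀ / 2) ^ (n : ℝ)

/-- Second-order increment `δ(u,x,y) = u(x+y) + u(x-y) - 2u(x)`. -/
noncomputable def delta2 {n : ℕ} (u : EuclideanSpace ℝ (Fin n) → ℝ)
    (x y : EuclideanSpace ℝ (Fin n)) : ℝ :=
  u (x + y) + u (x - y) - 2 * u x

/-- Integrand `δ(u,x,y)/|A⁻¹ y|^(n+2s)`. -/
noncomputable def kernelA {n : ℕ} (s : ℝ) (A : Matrix (Fin n) (Fin n) ℝ)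
    (u : EuclideanSpace ℝ (Fin n) → ℝ) (x y : EuclideanSpace ℝ (Fin n)) : ℝ :=
  delta2 u x y /
    ‖(EuclideanSpace.equiv (Fin n) ℝ).symm (A⁻¹.mulVec (EuclideanSpace.equiv (Fin n) ℝ y))‖ ^
      ((n : ℝ) + 2 * s)

/-- The linear operator `L_A u(x) = (1/2) ∫ δ(u,x,y)/|A⁻¹ y|^(n+2s) dy`. -/
noncomputable def LA {n : ℕ} (s : ℝ) (A : Matrix (Fin n) (Fin n) ℝ)
    (u : EuclideanSpace ℝ (Fin n) → ℝ) (x : EuclideanSpace ℝ (Fin n)) : ℝ :=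
  (1 / 2) * ∫ y, kernelA s A u x y

/-!
The ellipticity bound is tested on the matrix `A` with eigenvalue `l` along `e` and `κ` on `e^⊥`,
where `l κ^(n-1) = 1`. In the coordinates `y = t e + z`, averaging `L_A` over the reflection
`z ↦ -z` and using `δ(x, y+z) + δ(x, y-z) = 2 δ(x, y) + δ(x+y, z) + δ(x-y, z)` bounds
`δ(u, x, te ± z)` on average by `δ(u, x, te) + min (C |z|²) (2 L |z|)`. Integrating the kernel
`(t²/l² + |z|²/κ²)^(-(n+2s)/2)` over the other variable turns the two summands into
`l^(2s) C₂` times the one-dimensional operator along `e` and the error `κ^(2s) C₁`. Choosing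
`κ^(2s) C₁ = η₀/2` gives the lower bound. The upper bound comes
from `δ(u, x, y) ≤ min (C |y|²) (2 L |y|)`, whose one-dimensional integral is `2 μ₁/(1-s)`.
-/

section SecondIncrements

variable {n : ℕ} {u : EuclideanSpace ℝ (Fin n) → ℝ} {L C : ℝ}

/-- The bound `min (C r²) (2 L r)` for the second-order increment, at distance `r`, of a function
that is `L`-Lipschitz and semiconcave with constant `C`. -/
noncomputable def incrementBound (L C r : ℝ) : ℝ := min (C * r ^ 2) (2 * L * r)

@[fun_prop]
lemma measurable_incrementBound : Measurable (incrementBound L C) := by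
  unfold incrementBound
  fun_prop

lemma incrementBound_of_nonneg (hC : 0 < C) {r : ℝ} (hr : 0 ≤ r) :
    incrementBound L C r = C * r * min r (2 * L / C) := by
  rw [incrementBound, mul_min_of_nonneg _ _ (by positivity)]
  congr 1 <;> field_simp

lemma delta2_le_incrementBound (hLip : ∀ a b, |u a - u b| ≤ L * ‖a - b‖)
    (hSC : ∀ a b, delta2 u a b ≤ C * ‖b‖ ^ 2) (x y : EuclideanSpace ℝ (Fin n)) :
    delta2 u x y ≤ incrementBound L C ‖y‖ := by
  have h_forward : u (x + y) - u x ≤ L * ‖y‖ := by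
    simpa using (le_abs_self _).trans (hLip (x + y) x)
  have h_backward : u (x - y) - u x ≤ L * ‖y‖ := by
    simpa using (le_abs_self _).trans (hLip (x - y) x)
  refine le_min (hSC x y) ?_
  rw [delta2]
  linarith

lemma continuous_of_abs_sub_le (hLip : ∀ a b, |u a - u b| ≤ L * ‖a - b‖) : Continuous u :=
  (LipschitzWith.of_dist_le' (K := L) fun a b => by
    rw [Real.dist_eq, dist_eq_norm]; exact hLip a b).continuous

lemma delta2_add_add_delta2_sub (u : EuclideanSpace ℝ (Fin n) → ℝ)
    (x y z : EuclideanSpace ℝ (Fin n)) :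
    delta2 u x (y + z) + delta2 u x (y - z) =
      2 * delta2 u x y + delta2 u (x + y) z + delta2 u (x - y) z := by
  have h₁ : x - (y - z) = x - y + z := by abel
  simp only [delta2, ← add_assoc, ← add_sub_assoc, ← sub_sub, h₁]
  ring

lemma delta2_average_le (hδ : ∀ a b, delta2 u a b ≤ incrementBound L C ‖b‖)
    (x y z : EuclideanSpace ℝ (Fin n)) :
    (delta2 u x (y + z) + delta2 u x (y - z)) / 2 ≤
      delta2 u x y + incrementBound L C ‖z‖ := by
  linarith [delta2_add_add_delta2_sub u x y z, hδ (x + y) z, hδ (x - y) z]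

end SecondIncrements

section RadialIntegrals

lemma setIntegral_Ioc_min_mul_rpow_neg {p R : ℝ} (hp : p < 2) (hR : 0 < R) :
    ∫ r in Set.Ioc 0 R, min r R * r ^ (-p) = R ^ (2 - p) / (2 - p) := by
  have h_eq : Set.EqOn (fun r : ℝ => min r R * r ^ (-p)) (fun r => r ^ (1 - p)) (Set.Ioc 0 R) := by
    rintro r ⟨hr, hrR⟩
    simp only [min_eq_left hrR, sub_eq_add_neg, Real.rpow_add hr, Real.rpow_one]
  rw [setIntegral_congr_fun measurableSet_Ioc h_eq, ← intervalIntegral.integral_of_le hR.le,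
    integral_rpow (Or.inl (by linarith)), Real.zero_rpow (by linarith), sub_zero]
  ring_nf

lemma setIntegral_Ioi_min_mul_rpow_neg {p R : ℝ} (hp : 1 < p) (hR : 0 < R) :
    ∫ r in Set.Ioi R, min r R * r ^ (-p) = R ^ (2 - p) / (p - 1) := by
  have h_eq : Set.EqOn (fun r : ℝ => min r R * r ^ (-p)) (fun r => R * r ^ (-p)) (Set.Ioi R) :=
    fun r hr => by simp only [min_eq_right (Set.mem_Ioi.mp hr).le]
  have h_pow : R ^ (2 - p) = R * R ^ (-p + 1) := by
    rw [mul_comm, ← Real.rpow_add_one hR.ne']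
    ring_nf
  rw [setIntegral_congr_fun measurableSet_Ioi h_eq, integral_const_mul,
    integral_Ioi_rpow_of_lt (by linarith) hR, h_pow, ← neg_sub 1 p, div_neg]
  ring

lemma setIntegral_Ioi_zero_min_mul_rpow_neg {p R : ℝ} (hp₁ : 1 < p) (hp₂ : p < 2) (hR : 0 < R) :
    ∫ r in Set.Ioi 0, min r R * r ^ (-p) = R ^ (2 - p) / ((2 - p) * (p - 1)) := by
  have h₁ : 0 < p - 1 := by linarith
  have h₂ : 0 < 2 - p := by linarith
  have h_near := setIntegral_Ioc_min_mul_rpow_neg hp₂ hR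
  have h_far := setIntegral_Ioi_min_mul_rpow_neg hp₁ hR
  have h_int_near : IntegrableOn (fun r => min r R * r ^ (-p)) (Set.Ioc 0 R) :=
    .of_integral_ne_zero (by rw [h_near]; positivity)
  have h_int_far : IntegrableOn (fun r => min r R * r ^ (-p)) (Set.Ioi R) :=
    .of_integral_ne_zero (by rw [h_far]; positivity)
  rw [← Set.Ioc_union_Ioi_eq_Ioi hR.le, setIntegral_union (Set.Ioc_disjoint_Ioi le_rfl)
    measurableSet_Ioi h_int_near h_int_far, h_near, h_far]
  field_simp
  ring

variable {s L C : ℝ}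

lemma incrementBound_mul_rpow_neg (hC : 0 < C) {r : ℝ} (hr : 0 < r) :
    incrementBound L C r * r ^ (-(1 + 2 * s)) = C * (min r (2 * L / C) * r ^ (-(2 * s))) := by
  rw [incrementBound_of_nonneg hC hr.le, neg_add, Real.rpow_add hr, Real.rpow_neg_one]
  field_simp

lemma integral_incrementBound_mul_rpow_neg (hs : 1 / 2 < s) (hs1 : s < 1) (hL : 0 < L)
    (hC : 0 < C) :
    ∫ r in Set.Ioi 0, incrementBound L C r * r ^ (-(1 + 2 * s)) = mu1 s L C / (1 - s) := by
  have h_scale : C / 2 * (2 * L / C) ^ (2 - 2 * s) = L ^ (2 - 2 * s) * (C / 2) ^ (2 * s - 1) := by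
    rw [show 2 * L / C = L / (C / 2) by field_simp, Real.div_rpow hL.le (by positivity),
      show 2 * s - 1 = 1 - (2 - 2 * s) by ring, Real.rpow_sub (half_pos hC) 1, Real.rpow_one]
    ring
  have h₁ : 2 * s - 1 ≠ 0 := by linarith
  have h₂ : 1 - s ≠ 0 := by linarith
  rw [setIntegral_congr_fun measurableSet_Ioi fun r hr => incrementBound_mul_rpow_neg hC hr,
    integral_const_mul,
    setIntegral_Ioi_zero_min_mul_rpow_neg (by linarith) (by linarith) (by positivity), mu1,
    ← h_scale, show 2 - 2 * s = 2 * (1 - s) by ring]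
  field_simp

lemma mu1_pos (hs : 1 / 2 < s) (hL : 0 < L) (hC : 0 < C) : 0 < mu1 s L C := by
  have h : 0 < 2 * s - 1 := by linarith
  unfold mu1
  positivity

lemma integrableOn_incrementBound_mul_rpow_neg (hs : 1 / 2 < s) (hs1 : s < 1) (hL : 0 < L)
    (hC : 0 < C) :
    IntegrableOn (fun r => incrementBound L C r * r ^ (-(1 + 2 * s))) (Set.Ioi 0) := by
  refine .of_integral_ne_zero ?_
  rw [integral_incrementBound_mul_rpow_neg hs hs1 hL hC]
  exact (div_pos (mu1_pos hs hL hC) (sub_pos.mpr hs1)).ne'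

lemma mul_rpow_neg_one_add_eq_pow_smul (f : ℝ → ℝ) (p : ℝ) {k : ℕ} (hk : 0 < k) {r : ℝ}
    (hr : 0 < r) : f r * r ^ (-(1 + p)) = r ^ (k - 1) • (f r * r ^ (-(k + p))) := by
  rw [smul_eq_mul, mul_left_comm, ← Real.rpow_natCast r, ← Real.rpow_add hr, Nat.cast_sub hk]
  ring_nf

variable {W : Type*} [NormedAddCommGroup W] [InnerProductSpace ℝ W] [FiniteDimensional ℝ W]
  [MeasurableSpace W] [BorelSpace W] [Nontrivial W]

variable (W) in
lemma finrank_mul_volume_real_ball :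
    Module.finrank ℝ W * volume.real (Metric.ball (0 : W) 1) =
      surfOmega (Module.finrank ℝ W) := by
  have hk : (0 : ℝ) < Module.finrank ℝ W := by exact_mod_cast Module.finrank_pos
  have h_sqrt : √Real.pi ^ Module.finrank ℝ W = Real.pi ^ ((Module.finrank ℝ W : ℝ) / 2) := by
    rw [Real.sqrt_eq_rpow, ← Real.rpow_mul_natCast Real.pi_pos.le]
    ring_nf
  have := Real.Gamma_pos_of_pos (half_pos hk)
  rw [Measure.real, InnerProductSpace.volume_ball, h_sqrt, Real.Gamma_add_one (by positivity),
    ENNReal.ofReal_one, one_pow, one_mul, ENNReal.toReal_ofReal (by positivity), surfOmega]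
  field_simp

lemma integrable_norm_mul_rpow_neg_finrank_add_iff (f : ℝ → ℝ) (p : ℝ) :
    Integrable (fun z : W => f ‖z‖ * ‖z‖ ^ (-(Module.finrank ℝ W + p))) ↔
      IntegrableOn (fun r => f r * r ^ (-(1 + p))) (Set.Ioi 0) := by
  rw [integrable_fun_norm_addHaar volume (f := fun r => f r * r ^ (-(Module.finrank ℝ W + p)))]
  exact integrableOn_congr_fun
    (fun r hr => (mul_rpow_neg_one_add_eq_pow_smul f p Module.finrank_pos hr).symm)
    measurableSet_Ioi

lemma integral_norm_mul_rpow_neg_finrank_add (f : ℝ → ℝ) (p : ℝ) :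
    ∫ z : W, f ‖z‖ * ‖z‖ ^ (-(Module.finrank ℝ W + p)) =
      surfOmega (Module.finrank ℝ W) * ∫ r in Set.Ioi 0, f r * r ^ (-(1 + p)) := by
  rw [integral_fun_norm_addHaar volume fun r => f r * r ^ (-(Module.finrank ℝ W + p)),
    setIntegral_congr_fun measurableSet_Ioi
      fun r hr => mul_rpow_neg_one_add_eq_pow_smul f p (Module.finrank_pos (R := ℝ) (M := W)) hr,
    ← finrank_mul_volume_real_ball W, nsmul_eq_mul, smul_eq_mul, mul_assoc]

variable (W) in
lemma integrable_incrementBound_norm (hs : 1 / 2 < s) (hs1 : s < 1) (hL : 0 < L) (hC : 0 < C) :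
    Integrable fun z : W =>
      incrementBound L C ‖z‖ * ‖z‖ ^ (-(Module.finrank ℝ W + 2 * s)) :=
  (integrable_norm_mul_rpow_neg_finrank_add_iff (incrementBound L C) (2 * s)).mpr
    (integrableOn_incrementBound_mul_rpow_neg hs hs1 hL hC)

variable (W) in
lemma integral_incrementBound_norm (hs : 1 / 2 < s) (hs1 : s < 1) (hL : 0 < L) (hC : 0 < C) :
    ∫ z : W, incrementBound L C ‖z‖ * ‖z‖ ^ (-(Module.finrank ℝ W + 2 * s)) =
      surfOmega (Module.finrank ℝ W) * (mu1 s L C / (1 - s)) := by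
  rw [integral_norm_mul_rpow_neg_finrank_add,
    integral_incrementBound_mul_rpow_neg hs hs1 hL hC]

end RadialIntegrals

section JapaneseBracket

/-- The value `π^(k/2) Γ((r-k)/2) / Γ(r/2)` of the integral of `(1 + |z|²)^(-r/2)` over a Euclidean
space of dimension `k < r`. -/
noncomputable def bracketIntegral (k : ℕ) (r : ℝ) : ℝ :=
  Real.pi ^ ((k : ℝ) / 2) * Real.Gamma ((r - k) / 2) / Real.Gamma (r / 2)

lemma bracketIntegral_pos {k : ℕ} {r : ℝ} (hr : k < r) : 0 < bracketIntegral k r := by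
  have h_num : 0 < Real.Gamma ((r - k) / 2) := Real.Gamma_pos_of_pos (by linarith)
  have h_den : 0 < Real.Gamma (r / 2) :=
    Real.Gamma_pos_of_pos (half_pos (k.cast_nonneg.trans_lt hr))
  exact div_pos (mul_pos (Real.rpow_pos_of_pos Real.pi_pos _) h_num) h_den

/-- The integrand of the subordination formula
`Γ(r/2) (1 + |z|²)^(-r/2) = ∫₀^∞ t^(r/2-1) exp(-(1 + |z|²) t) dt`. -/
noncomputable def gaussianMixture {W : Type*} [Norm W] (r : ℝ) (z : W) (t : ℝ) : ℝ :=
  t ^ (r / 2 - 1) * Real.exp (-((1 + ‖z‖ ^ 2) * t))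

lemma setIntegral_gaussianMixture {W : Type*} [Norm W] {r : ℝ} (hr : 0 < r) (z : W) :
    ∫ t in Set.Ioi 0, gaussianMixture r z t = Real.Gamma (r / 2) * (1 + ‖z‖ ^ 2) ^ (-r / 2) := by
  simp only [gaussianMixture]
  rw [Real.integral_rpow_mul_exp_neg_mul_Ioi (half_pos hr) (by positivity), one_div,
    Real.inv_rpow (by positivity), ← Real.rpow_neg (by positivity), mul_comm, neg_div]

variable {W : Type*} [NormedAddCommGroup W] [InnerProductSpace ℝ W] [FiniteDimensional ℝ W]
  [MeasurableSpace W] [BorelSpace W] {r : ℝ}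

lemma integral_gaussianMixture {t : ℝ} (ht : 0 < t) :
    ∫ z : W, gaussianMixture r z t =
      Real.pi ^ ((Module.finrank ℝ W : ℝ) / 2) *
        (t ^ ((r - Module.finrank ℝ W) / 2 - 1) * Real.exp (-(1 * t))) := by
  have h_split : ∀ z : W, gaussianMixture r z t =
      t ^ (r / 2 - 1) * Real.exp (-(1 * t)) * Real.exp (-t * ‖z‖ ^ 2) := fun z => by
    rw [gaussianMixture, mul_assoc, ← Real.exp_add]
    ring_nf
  simp_rw [h_split]
  rw [integral_const_mul, GaussianFourier.integral_rexp_neg_mul_sq_norm ht,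
    Real.div_rpow Real.pi_pos.le ht.le, show (r - Module.finrank ℝ W) / 2 - 1 =
      (r / 2 - 1) - (Module.finrank ℝ W : ℝ) / 2 by ring,
    Real.rpow_sub ht (r / 2 - 1)]
  ring

lemma integrable_gaussianMixture (hr : Module.finrank ℝ W < r) :
    Integrable (Function.uncurry (gaussianMixture (W := W) r))
      (volume.prod (volume.restrict (Set.Ioi 0))) := by
  have hr₀ : 0 < r := (Nat.cast_nonneg _).trans_lt hr
  have h_meas : Measurable (Function.uncurry (gaussianMixture (W := W) r)) := by
    unfold Function.uncurry gaussianMixture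
    fun_prop
  have h_norm (z : W) : ∫ t in Set.Ioi 0, ‖gaussianMixture r z t‖ =
      Real.Gamma (r / 2) * (1 + ‖z‖ ^ 2) ^ (-r / 2) := by
    rw [← setIntegral_gaussianMixture hr₀]
    refine setIntegral_congr_fun measurableSet_Ioi fun t (ht : 0 < t) => Real.norm_of_nonneg ?_
    unfold gaussianMixture
    positivity
  refine (integrable_prod_iff h_meas.aestronglyMeasurable).mpr ⟨.of_forall fun z => ?_, ?_⟩
  · refine .of_integral_ne_zero ?_
    simp only [Function.uncurry_apply_pair]
    rw [setIntegral_gaussianMixture hr₀]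
    have := Real.Gamma_pos_of_pos (half_pos hr₀)
    positivity
  · simp only [Function.uncurry_apply_pair, h_norm]
    exact (integrable_rpow_neg_one_add_norm_sq hr).const_mul _

lemma integral_rpow_neg_one_add_norm_sq (hr : Module.finrank ℝ W < r) :
    ∫ z : W, (1 + ‖z‖ ^ 2) ^ (-r / 2) = bracketIntegral (Module.finrank ℝ W) r := by
  have hr₀ : 0 < r := (Nat.cast_nonneg _).trans_lt hr
  have h_Fubini := integral_integral_swap (integrable_gaussianMixture hr)
  simp_rw [setIntegral_gaussianMixture hr₀] at h_Fubini
  rw [setIntegral_congr_fun measurableSet_Ioi fun t ht => integral_gaussianMixture ht,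
    integral_const_mul, integral_const_mul,
    Real.integral_rpow_mul_exp_neg_mul_Ioi (by linarith) one_pos, div_one, Real.one_rpow,
    one_mul] at h_Fubini
  rw [bracketIntegral, ← h_Fubini, mul_div_cancel_left₀]
  exact (Real.Gamma_pos_of_pos (half_pos hr₀)).ne'

end JapaneseBracket

section EllipsoidalKernel

/-- The kernel `(|y|²/a² + |z|²/b²)^(-r/2)`, i.e. the `(-r)`-th power of the norm on `E × F` whose
unit ball is the ellipsoid with semi-axes `a` in the directions of `E` and `b` in those of `F`. -/
noncomputable def ellipsoidalKernel {E F : Type*} [Norm E] [Norm F] (a b r : ℝ) (p : E × F) : ℝ :=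
  (‖p.1‖ ^ 2 / a ^ 2 + ‖p.2‖ ^ 2 / b ^ 2) ^ (-r / 2)

lemma ellipsoidalKernel_swap {E F : Type*} [Norm E] [Norm F] (a b r : ℝ) (p : E × F) :
    ellipsoidalKernel b a r p.swap = ellipsoidalKernel a b r p := by
  simp only [ellipsoidalKernel, Prod.fst_swap, Prod.snd_swap, add_comm]

lemma ellipsoidalKernel_nonneg {E F : Type*} [Norm E] [Norm F] (a b r : ℝ) (p : E × F) :
    0 ≤ ellipsoidalKernel a b r p := by
  unfold ellipsoidalKernel
  positivity

@[fun_prop]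
lemma measurable_ellipsoidalKernel {E F : Type*} [NormedAddCommGroup E] [MeasurableSpace E]
    [OpensMeasurableSpace E] [NormedAddCommGroup F] [MeasurableSpace F] [OpensMeasurableSpace F]
    (a b r : ℝ) : Measurable (ellipsoidalKernel a b r : E × F → ℝ) := by
  unfold ellipsoidalKernel
  fun_prop

lemma ellipsoidalKernel_eq_rpow_mul_bracket {E F : Type*} [NormedAddCommGroup E]
    [NormedAddCommGroup F] [NormedSpace ℝ F] {a b r : ℝ} (ha : 0 < a) (hb : 0 < b) {y : E}
    (hy : y ≠ 0) (z : F) :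
    ellipsoidalKernel a b r (y, z) =
      (‖y‖ / a) ^ (-r) * (1 + ‖(a / (b * ‖y‖)) • z‖ ^ 2) ^ (-r / 2) := by
  have hy' : 0 < ‖y‖ := norm_pos_iff.mpr hy
  have h_factor : ‖y‖ ^ 2 / a ^ 2 + ‖z‖ ^ 2 / b ^ 2 =
      (‖y‖ / a) ^ 2 * (1 + ‖(a / (b * ‖y‖)) • z‖ ^ 2) := by
    rw [norm_smul, Real.norm_of_nonneg (div_pos ha (mul_pos hb hy')).le]
    field_simp
  have h_pow : ((‖y‖ / a) ^ 2) ^ (-r / 2) = (‖y‖ / a) ^ (-r) := by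
    rw [← Real.rpow_natCast_mul (by positivity), Nat.cast_ofNat, mul_div_cancel₀ _ two_ne_zero]
  rw [ellipsoidalKernel, h_factor, Real.mul_rpow (by positivity) (by positivity), h_pow]

variable {E : Type*} [NormedAddCommGroup E] {F : Type*} [NormedAddCommGroup F]
  [InnerProductSpace ℝ F] [FiniteDimensional ℝ F] [MeasurableSpace F] [BorelSpace F] {a b r : ℝ}

lemma integrable_ellipsoidalKernel_right (ha : 0 < a) (hb : 0 < b) (hr : Module.finrank ℝ F < r)
    {y : E} (hy : y ≠ 0) : Integrable fun z : F => ellipsoidalKernel a b r (y, z) := by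
  simp only [ellipsoidalKernel_eq_rpow_mul_bracket ha hb hy]
  have h_ne : a / (b * ‖y‖) ≠ 0 := by positivity
  exact ((integrable_rpow_neg_one_add_norm_sq hr).comp_smul h_ne).const_mul _

lemma integral_ellipsoidalKernel_right (ha : 0 < a) (hb : 0 < b) (hr : Module.finrank ℝ F < r)
    {y : E} (hy : y ≠ 0) :
    ∫ z : F, ellipsoidalKernel a b r (y, z) =
      a ^ (r - Module.finrank ℝ F) * b ^ Module.finrank ℝ F *
        bracketIntegral (Module.finrank ℝ F) r * ‖y‖ ^ (-(r - Module.finrank ℝ F)) := by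
  have hy' : 0 < ‖y‖ := norm_pos_iff.mpr hy
  have h_scale : 0 ≤ a / (b * ‖y‖) := by positivity
  simp only [ellipsoidalKernel_eq_rpow_mul_bracket ha hb hy]
  rw [integral_const_mul, Measure.integral_comp_smul_of_nonneg (hR := h_scale) volume
      fun z : F => (1 + ‖z‖ ^ 2) ^ (-r / 2),
    integral_rpow_neg_one_add_norm_sq hr, smul_eq_mul, Real.div_rpow hy'.le ha.le, neg_sub,
    Real.rpow_sub ha, Real.rpow_sub hy', Real.rpow_neg ha.le, Real.rpow_neg hy'.le,
    Real.rpow_natCast, Real.rpow_natCast, div_pow, mul_pow]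
  field_simp

section FirstFactor

variable [MeasurableSpace E] [OpensMeasurableSpace E] {μ : Measure E} [NullSingletonClass μ]

lemma integrable_fst_mul_ellipsoidalKernel_iff (ha : 0 < a) (hb : 0 < b)
    (hr : Module.finrank ℝ F < r) {g : E → ℝ} (hg : Measurable g) :
    Integrable (fun p : E × F => g p.1 * ellipsoidalKernel a b r p) (μ.prod volume) ↔
      Integrable (fun y => g y * ‖y‖ ^ (-(r - Module.finrank ℝ F))) μ := by
  have h_ne : ∀ᵐ y ∂μ, y ≠ 0 := Measure.ae_ne μ 0
  have h_section : ∀ᵐ y ∂μ, Integrable fun z : F => g y * ellipsoidalKernel a b r (y, z) := by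
    filter_upwards [h_ne] with y hy
    exact (integrable_ellipsoidalKernel_right ha hb hr hy).const_mul _
  have h_const : a ^ (r - Module.finrank ℝ F) * b ^ Module.finrank ℝ F *
      bracketIntegral (Module.finrank ℝ F) r ≠ 0 :=
    have := bracketIntegral_pos hr
    by positivity
  have h_norm : (fun y => ∫ z : F, ‖g y * ellipsoidalKernel a b r (y, z)‖) =ᵐ[μ] fun y =>
      a ^ (r - Module.finrank ℝ F) * b ^ Module.finrank ℝ F *
        bracketIntegral (Module.finrank ℝ F) r *
          ‖g y * ‖y‖ ^ (-(r - Module.finrank ℝ F))‖ := by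
    filter_upwards [h_ne] with y hy
    simp only [norm_mul, Real.norm_of_nonneg (ellipsoidalKernel_nonneg _ _ _ _),
      Real.norm_of_nonneg (Real.rpow_nonneg (norm_nonneg y) _)]
    rw [integral_const_mul, integral_ellipsoidalKernel_right ha hb hr hy]
    ring
  rw [integrable_prod_iff (by fun_prop), and_iff_right h_section, integrable_congr h_norm,
    integrable_const_mul_iff h_const.isUnit, integrable_norm_iff (by fun_prop)]

lemma integral_fst_mul_ellipsoidalKernel [SFinite μ] (ha : 0 < a) (hb : 0 < b)
    (hr : Module.finrank ℝ F < r) {g : E → ℝ} (hg : Measurable g)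
    (h_int : Integrable (fun y => g y * ‖y‖ ^ (-(r - Module.finrank ℝ F))) μ) :
    ∫ p : E × F, g p.1 * ellipsoidalKernel a b r p ∂(μ.prod volume) =
      a ^ (r - Module.finrank ℝ F) * b ^ Module.finrank ℝ F *
        bracketIntegral (Module.finrank ℝ F) r *
          ∫ y, g y * ‖y‖ ^ (-(r - Module.finrank ℝ F)) ∂μ := by
  rw [integral_prod _ ((integrable_fst_mul_ellipsoidalKernel_iff ha hb hr hg).mpr h_int),
    ← integral_const_mul]
  refine integral_congr_ae ?_
  filter_upwards [Measure.ae_ne μ 0] with y hy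
  rw [integral_const_mul, integral_ellipsoidalKernel_right ha hb hr hy]
  ring

end FirstFactor

section SecondFactor

variable [InnerProductSpace ℝ E] [FiniteDimensional ℝ E] [MeasurableSpace E] [BorelSpace E]
  [Nontrivial F]

lemma integrable_snd_mul_ellipsoidalKernel_iff (ha : 0 < a) (hb : 0 < b)
    (hr : Module.finrank ℝ E < r) {g : F → ℝ} (hg : Measurable g) :
    Integrable (fun p : E × F => g p.2 * ellipsoidalKernel a b r p) (volume.prod volume) ↔
      Integrable fun z => g z * ‖z‖ ^ (-(r - Module.finrank ℝ E)) := by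
  rw [← integrable_fst_mul_ellipsoidalKernel_iff hb ha hr hg, ← integrable_swap_iff]
  simp only [Function.comp_def, Prod.snd_swap, ellipsoidalKernel_swap]

lemma integral_snd_mul_ellipsoidalKernel (ha : 0 < a) (hb : 0 < b)
    (hr : Module.finrank ℝ E < r) {g : F → ℝ} (hg : Measurable g)
    (h_int : Integrable fun z => g z * ‖z‖ ^ (-(r - Module.finrank ℝ E))) :
    ∫ p : E × F, g p.2 * ellipsoidalKernel a b r p ∂(volume.prod volume) =
      b ^ (r - Module.finrank ℝ E) * a ^ Module.finrank ℝ E *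
        bracketIntegral (Module.finrank ℝ E) r *
          ∫ z, g z * ‖z‖ ^ (-(r - Module.finrank ℝ E)) := by
  rw [← integral_fst_mul_ellipsoidalKernel hb ha hr hg h_int, ← integral_prod_swap]
  simp only [Prod.snd_swap, ellipsoidalKernel_swap]

end SecondFactor

end EllipsoidalKernel

section AxialStretch

open Matrix

lemma dotProduct_self_of_norm_eq_one {ι : Type*} [Fintype ι] {e : EuclideanSpace ℝ ι}
    (he : ‖e‖ = 1) : e ⬝ᵥ e = 1 := by
  have h_inner := EuclideanSpace.inner_eq_star_dotProduct e e
  rwa [real_inner_self_eq_norm_sq, he, one_pow, star_trivial, eq_comm] at h_inner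

variable {ι : Type*} [DecidableEq ι]

/-- The symmetric matrix with eigenvalue `l` along the unit vector `v` and `κ` on its orthogonal
complement. -/
def axialStretch (κ l : ℝ) (v : ι → ℝ) : Matrix ι ι ℝ := κ • 1 + (l - κ) • vecMulVec v v

lemma axialStretch_self (κ : ℝ) (v : ι → ℝ) : axialStretch κ κ v = κ • 1 := by
  rw [axialStretch, sub_self, zero_smul, add_zero]

lemma isHermitian_axialStretch (κ l : ℝ) (v : ι → ℝ) : (axialStretch κ l v).IsHermitian := by
  simp only [IsHermitian, axialStretch, conjTranspose_add, conjTranspose_smul, conjTranspose_one,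
    conjTranspose_vecMulVec, star_trivial]

variable [Fintype ι] {v : ι → ℝ}

lemma axialStretch_mulVec (κ l : ℝ) (v y : ι → ℝ) :
    axialStretch κ l v *ᵥ y = κ • y + ((l - κ) * (v ⬝ᵥ y)) • v := by
  ext i
  simp only [axialStretch, add_mulVec, smul_mulVec, one_mulVec, vecMulVec_mulVec, Pi.add_apply,
    Pi.smul_apply, MulOpposite.smul_eq_mul_unop, MulOpposite.unop_op, smul_eq_mul]
  ring

lemma axialStretch_mul (hv : v ⬝ᵥ v = 1) (κ l κ' l' : ℝ) :
    axialStretch κ l v * axialStretch κ' l' v = axialStretch (κ * κ') (l * l') v := by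
  have h_proj : vecMulVec v v * vecMulVec v v = vecMulVec v v := by
    rw [vecMulVec_mul_vecMulVec, hv, one_smul]
  simp only [axialStretch, add_mul, mul_add, smul_mul_assoc, mul_smul_comm, one_mul, mul_one,
    h_proj]
  module

lemma inv_axialStretch (hv : v ⬝ᵥ v = 1) {κ l : ℝ} (hκ : κ ≠ 0) (hl : l ≠ 0) :
    (axialStretch κ l v)⁻¹ = axialStretch κ⁻¹ l⁻¹ v := by
  refine inv_eq_right_inv ?_
  rw [axialStretch_mul hv, mul_inv_cancel₀ hκ, mul_inv_cancel₀ hl, axialStretch_self, one_smul]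

lemma posDef_axialStretch (hv : v ⬝ᵥ v = 1) {κ l : ℝ} (hκ : 0 < κ) (hl : 0 < l) :
    (axialStretch κ l v).PosDef := by
  have h_sqrt : (axialStretch √κ √l v)ᴴ * axialStretch √κ √l v = axialStretch κ l v := by
    rw [isHermitian_axialStretch, axialStretch_mul hv, Real.mul_self_sqrt hκ.le,
      Real.mul_self_sqrt hl.le]
  have h_unit : IsUnit (axialStretch √κ √l v) := by
    refine IsUnit.of_mul_eq_one (axialStretch (√κ)⁻¹ (√l)⁻¹ v) ?_
    rw [axialStretch_mul hv, mul_inv_cancel₀ (Real.sqrt_pos.mpr hκ).ne',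
      mul_inv_cancel₀ (Real.sqrt_pos.mpr hl).ne', axialStretch_self, one_smul]
  rw [← h_sqrt]
  exact PosDef.conjTranspose_mul_self _ (mulVec_injective_of_isUnit h_unit)

lemma det_axialStretch (hv : v ⬝ᵥ v = 1) {κ : ℝ} (hκ : κ ≠ 0) (l : ℝ) :
    (axialStretch κ l v).det = l * κ ^ (Fintype.card ι - 1) := by
  have : Nonempty ι := not_isEmpty_iff.mp fun _ => by simp at hv
  have h_factor : axialStretch κ l v =
      κ • (1 + replicateCol Unit (((l - κ) / κ) • v) * replicateRow Unit v) := by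
    rw [← vecMulVec_eq, smul_vecMulVec, axialStretch, smul_add, smul_smul, mul_div_cancel₀ _ hκ]
  rw [h_factor, det_smul, det_one_add_replicateCol_mul_replicateRow, dotProduct_smul, hv,
    ← Nat.sub_add_cancel Fintype.card_pos, pow_succ, Nat.add_sub_cancel]
  simp only [smul_eq_mul]
  field_simp
  ring

lemma norm_sq_inv_axialStretch_mulVec {n : ℕ} {e z : EuclideanSpace ℝ (Fin n)} (he : ‖e‖ = 1)
    (hez : inner ℝ e z = 0) {κ l : ℝ} (hκ : κ ≠ 0) (hl : l ≠ 0) (t : ℝ) :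
    ‖(EuclideanSpace.equiv (Fin n) ℝ).symm ((axialStretch κ l e)⁻¹ *ᵥ
      EuclideanSpace.equiv (Fin n) ℝ (t • e + z))‖ ^ 2 = ‖t‖ ^ 2 / l ^ 2 + ‖z‖ ^ 2 / κ ^ 2 := by
  have h_dot (y : EuclideanSpace ℝ (Fin n)) :
      e ⬝ᵥ EuclideanSpace.equiv (Fin n) ℝ y = inner ℝ e y := by
    rw [EuclideanSpace.inner_eq_star_dotProduct, star_trivial, dotProduct_comm]
    rfl
  have h_unit : inner ℝ e e = 1 := by rw [real_inner_self_eq_norm_sq, he, one_pow]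
  have h_image : (EuclideanSpace.equiv (Fin n) ℝ).symm ((axialStretch κ l e)⁻¹ *ᵥ
      EuclideanSpace.equiv (Fin n) ℝ (t • e + z)) = (l⁻¹ * t) • e + κ⁻¹ • z := by
    rw [inv_axialStretch (dotProduct_self_of_norm_eq_one he) hκ hl, axialStretch_mulVec, h_dot,
      inner_add_right, inner_smul_right, h_unit, hez, map_add, map_smul, map_smul,
      ContinuousLinearEquiv.symm_apply_apply, show (EuclideanSpace.equiv _ ℝ).symm e = e from rfl]
    module
  rw [h_image, norm_add_sq_real, inner_smul_left, inner_smul_right, hez, norm_smul, norm_smul, he,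
    norm_mul, norm_inv, norm_inv, mul_one, mul_zero, mul_zero, mul_zero, add_zero, mul_pow, mul_pow,
    inv_pow, inv_pow, Real.norm_eq_abs l, sq_abs, Real.norm_eq_abs κ, sq_abs]
  ring

end AxialStretch

section OrthogonalSplitting

variable {E : Type*} [NormedAddCommGroup E] [InnerProductSpace ℝ E] [FiniteDimensional ℝ E]
  {e : E}

lemma finrank_orthogonal_span_unit (he : ‖e‖ = 1) :
    Module.finrank ℝ (ℝ ∙ e)ᗮ = Module.finrank ℝ E - 1 := by
  have h_ne : e ≠ 0 := norm_ne_zero_iff.mp (he.trans_ne one_ne_zero)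
  rw [← (ℝ ∙ e).finrank_add_finrank_orthogonal, finrank_span_singleton h_ne,
    Nat.add_sub_cancel_left]

variable [MeasurableSpace E] [BorelSpace E]

/-- The orthogonal splitting `(t, z) ↦ t e + z` of a Euclidean space along a unit vector `e`. -/
noncomputable def axisProdOrthogonal (e : E) (he : ‖e‖ = 1) : ℝ × (ℝ ∙ e)ᗮ ≃ᵐ E :=
  ((LinearIsometryEquiv.toSpanUnitSingleton e he).toHomeomorph.toMeasurableEquiv.prodCongr
      (.refl _)).trans <|
    (MeasurableEquiv.toLp 2 _).trans
      (ℝ ∙ e).orthogonalDecomposition.symm.toHomeomorph.toMeasurableEquiv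

lemma axisProdOrthogonal_apply (he : ‖e‖ = 1) (p : ℝ × (ℝ ∙ e)ᗮ) :
    axisProdOrthogonal e he p = p.1 • e + (p.2 : E) := by
  rfl

lemma measurePreserving_axisProdOrthogonal (he : ‖e‖ = 1) :
    MeasurePreserving (axisProdOrthogonal e he) :=
  (ℝ ∙ e).orthogonalDecomposition.symm.measurePreserving.comp <|
    (WithLp.volume_preserving_toLp (ℝ ∙ e) (ℝ ∙ e)ᗮ).comp <|
      (LinearIsometryEquiv.toSpanUnitSingleton e he).measurePreserving.prod (.id _)

end OrthogonalSplitting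

section Symmetrization

lemma integrable_and_integral_le_of_symmetrization_le {α : Type*} [MeasurableSpace α]
    {μ : Measure α} {σ : α ≃ᵐ α} (hσ : MeasurePreserving σ μ μ) {f g h : α → ℝ}
    (hf : Integrable f μ) (hg : AEStronglyMeasurable g μ) (hh : Integrable h μ)
    (hfg : ∀ p, (f p + f (σ p)) / 2 ≤ g p) (hgh : ∀ p, g p ≤ h p) :
    Integrable g μ ∧ ∫ p, f p ∂μ ≤ ∫ p, g p ∂μ := by
  have hfσ : Integrable (fun p => f (σ p)) μ :=
    (hσ.integrable_comp_emb σ.measurableEmbedding).mpr hf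
  have h_avg : Integrable (fun p => (f p + f (σ p)) / 2) μ := (hf.add hfσ).div_const 2
  have hg_int : Integrable g μ :=
    integrable_of_le_of_le hg (.of_forall hfg) (.of_forall hgh) h_avg hh
  refine ⟨hg_int, ?_⟩
  calc ∫ p, f p ∂μ = ∫ p, (f p + f (σ p)) / 2 ∂μ := by
        rw [integral_div, integral_add hf hfσ, hσ.integral_comp σ.measurableEmbedding,
          add_self_div_two]
    _ ≤ ∫ p, g p ∂μ := integral_mono h_avg hg_int hfg

end Symmetrization

section Slicing

variable {V : Type*} [NormedAddCommGroup V] [InnerProductSpace ℝ V] [FiniteDimensional ℝ V]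
  [MeasurableSpace V] [BorelSpace V] {r s L C κ l : ℝ}

lemma integrable_fst_mul_ellipsoidalKernel_iff_rpow_neg (hs : 0 < s) (hκ : 0 < κ) (hl : 0 < l)
    (hr : r = Module.finrank ℝ V + 1 + 2 * s) {g : ℝ → ℝ} (hg : Measurable g) :
    Integrable (fun p : ℝ × V => g p.1 * ellipsoidalKernel l κ r p) ↔
      Integrable fun t => g t * ‖t‖ ^ (-(1 + 2 * s)) := by
  refine (integrable_fst_mul_ellipsoidalKernel_iff hl hκ (by linarith) hg).trans ?_
  rw [show r - Module.finrank ℝ V = 1 + 2 * s by linarith]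

variable [Nontrivial V]

lemma integrable_incrementBound_snd_mul_ellipsoidalKernel (hs : 1 / 2 < s) (hs1 : s < 1)
    (hL : 0 < L) (hC : 0 < C) (hκ : 0 < κ) (hl : 0 < l)
    (hr : r - 1 = Module.finrank ℝ V + 2 * s) :
    Integrable fun p : ℝ × V => incrementBound L C ‖p.2‖ * ellipsoidalKernel l κ r p := by
  have hr₁ : (Module.finrank ℝ ℝ : ℝ) < r := by
    rw [Module.finrank_self, Nat.cast_one]
    linarith [(Module.finrank ℝ V).cast_nonneg (α := ℝ)]
  refine (integrable_snd_mul_ellipsoidalKernel_iff hl hκ hr₁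
    (g := fun z => incrementBound L C ‖z‖) (by fun_prop)).mpr ?_
  rw [Module.finrank_self, Nat.cast_one, hr]
  exact integrable_incrementBound_norm V hs hs1 hL hC

lemma integral_incrementBound_snd_mul_ellipsoidalKernel (hs : 1 / 2 < s) (hs1 : s < 1)
    (hL : 0 < L) (hC : 0 < C) (hκ : 0 < κ) (hl : 0 < l)
    (hr : r - 1 = Module.finrank ℝ V + 2 * s) :
    ∫ p : ℝ × V, incrementBound L C ‖p.2‖ * ellipsoidalKernel l κ r p =
      κ ^ (r - 1) * l * bracketIntegral 1 r *
        (surfOmega (Module.finrank ℝ V) * (mu1 s L C / (1 - s))) := by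
  have hr₁ : (Module.finrank ℝ ℝ : ℝ) < r := by
    rw [Module.finrank_self, Nat.cast_one]
    linarith [(Module.finrank ℝ V).cast_nonneg (α := ℝ)]
  have h_slice := integral_snd_mul_ellipsoidalKernel (E := ℝ) (F := V) hl hκ hr₁
    (g := fun z => incrementBound L C ‖z‖) (by fun_prop)
  rw [Module.finrank_self, Nat.cast_one, pow_one, hr, integral_incrementBound_norm V hs hs1 hL hC]
    at h_slice
  rw [hr]
  exact h_slice (integrable_incrementBound_norm V hs hs1 hL hC)

/-- Averaging over the reflection `z ↦ -z`, which leaves the kernel invariant, replaces `G` by a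
function that is bounded by a sum of functions of one variable each. -/
lemma integrable_and_integral_le_of_reflection_average_le (hs : 1 / 2 < s) (hs1 : s < 1)
    (hL : 0 < L) (hC : 0 < C) (hκ : 0 < κ) (hl : 0 < l)
    (hr : r = Module.finrank ℝ V + 1 + 2 * s) {G : ℝ × V → ℝ}
    (hG : Integrable fun p => G p * ellipsoidalKernel l κ r p)
    {g : ℝ → ℝ} (hg : Measurable g) (hg_le : ∀ t, g t ≤ incrementBound L C ‖t‖)
    (hGg : ∀ t z, (G (t, z) + G (t, -z)) / 2 ≤ g t + incrementBound L C ‖z‖) :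
    Integrable (fun p : ℝ × V =>
        (g p.1 + incrementBound L C ‖p.2‖) * ellipsoidalKernel l κ r p) ∧
      ∫ p, G p * ellipsoidalKernel l κ r p ≤
        ∫ p : ℝ × V, (g p.1 + incrementBound L C ‖p.2‖) * ellipsoidalKernel l κ r p := by
  have h_axis : Integrable fun t : ℝ => incrementBound L C ‖t‖ * ‖t‖ ^ (-(1 + 2 * s)) := by
    simpa only [Module.finrank_self, Nat.cast_one] using
      integrable_incrementBound_norm ℝ hs hs1 hL hC
  have h_fst : Integrable fun p : ℝ × V => incrementBound L C ‖p.1‖ * ellipsoidalKernel l κ r p :=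
    (integrable_fst_mul_ellipsoidalKernel_iff_rpow_neg (by linarith) hκ hl hr
      (g := fun t => incrementBound L C ‖t‖) (by fun_prop)).mpr h_axis
  have h_snd : Integrable fun p : ℝ × V => incrementBound L C ‖p.2‖ * ellipsoidalKernel l κ r p :=
    integrable_incrementBound_snd_mul_ellipsoidalKernel hs hs1 hL hC hκ hl (by linarith)
  have h_dom : Integrable fun p : ℝ × V =>
      (incrementBound L C ‖p.1‖ + incrementBound L C ‖p.2‖) * ellipsoidalKernel l κ r p := by
    simp only [add_mul]
    exact h_fst.add h_snd
  let reflection : ℝ × V ≃ᵐ ℝ × V := (MeasurableEquiv.refl ℝ).prodCongr (MeasurableEquiv.neg V)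
  have h_reflection : MeasurePreserving reflection :=
    (MeasurePreserving.id volume).prod (Measure.measurePreserving_neg volume)
  refine integrable_and_integral_le_of_symmetrization_le h_reflection hG (by fun_prop) h_dom
    (fun p => ?_) fun p => ?_
  · have h_apply : reflection p = (p.1, -p.2) := rfl
    have h_even : ellipsoidalKernel l κ r (p.1, -p.2) = ellipsoidalKernel l κ r p := by
      simp only [ellipsoidalKernel, norm_neg]
    rw [h_apply, h_even, ← add_mul, mul_div_right_comm]
    exact mul_le_mul_of_nonneg_right (hGg p.1 p.2) (ellipsoidalKernel_nonneg _ _ _ _)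
  · have := ellipsoidalKernel_nonneg l κ r p
    gcongr
    exact hg_le p.1

lemma integrable_and_integral_le_of_slice_average_le (hs : 1 / 2 < s) (hs1 : s < 1) (hL : 0 < L)
    (hC : 0 < C) (hκ : 0 < κ) (hl : 0 < l) (hr : r = Module.finrank ℝ V + 1 + 2 * s)
    {G : ℝ × V → ℝ} (hG : Integrable fun p => G p * ellipsoidalKernel l κ r p)
    {g : ℝ → ℝ} (hg : Measurable g) (hg_le : ∀ t, g t ≤ incrementBound L C ‖t‖)
    (hGg : ∀ t z, (G (t, z) + G (t, -z)) / 2 ≤ g t + incrementBound L C ‖z‖) :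
    Integrable (fun t => g t * ‖t‖ ^ (-(1 + 2 * s))) ∧
      ∫ p, G p * ellipsoidalKernel l κ r p ≤
        l ^ (1 + 2 * s) * κ ^ Module.finrank ℝ V * bracketIntegral (Module.finrank ℝ V) r *
            (∫ t, g t * ‖t‖ ^ (-(1 + 2 * s))) +
          κ ^ (r - 1) * l * bracketIntegral 1 r *
            (surfOmega (Module.finrank ℝ V) * (mu1 s L C / (1 - s))) := by
  have hr_axis : r - Module.finrank ℝ V = 1 + 2 * s := by linarith
  have hr_lt : Module.finrank ℝ V < r := by linarith
  have hr_one : r - 1 = Module.finrank ℝ V + 2 * s := by linarith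
  obtain ⟨h_sum, h_le⟩ := integrable_and_integral_le_of_reflection_average_le hs hs1 hL hC hκ hl hr
    hG hg hg_le hGg
  simp only [add_mul] at h_sum h_le
  have h_snd := integrable_incrementBound_snd_mul_ellipsoidalKernel (V := V) hs hs1 hL hC hκ hl
    hr_one
  have h_fst : Integrable fun p : ℝ × V => g p.1 * ellipsoidalKernel l κ r p := by
    simpa only [Pi.sub_def, add_sub_cancel_right] using h_sum.sub h_snd
  have h_axis := (integrable_fst_mul_ellipsoidalKernel_iff_rpow_neg (by linarith) hκ hl hr hg).mp
    h_fst
  have h_slice := integral_fst_mul_ellipsoidalKernel (μ := volume) hl hκ hr_lt hg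
  rw [hr_axis] at h_slice
  refine ⟨h_axis, h_le.trans_eq ?_⟩
  rw [integral_add h_fst h_snd,
    integral_incrementBound_snd_mul_ellipsoidalKernel hs hs1 hL hC hκ hl hr_one]
  exact congrArg (· + _) (h_slice h_axis)

end Slicing

section Constants

variable {n k : ℕ} {s L C η₀ : ℝ}

lemma surfOmega_pos (hk : 0 < k) : 0 < surfOmega k := by
  have : 0 < Real.Gamma ((k : ℝ) / 2) := Real.Gamma_pos_of_pos (by positivity)
  unfold surfOmega
  positivity

lemma surfOmega_one : surfOmega 1 = 2 := by
  have hπ : √Real.pi ≠ 0 := (Real.sqrt_pos.mpr Real.pi_pos).ne'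
  rw [surfOmega, Nat.cast_one, ← Real.sqrt_eq_rpow, Real.Gamma_one_half_eq,
    mul_div_cancel_right₀ _ hπ]

lemma surfOmega_mul_Gamma_half (hk : 0 < k) :
    surfOmega k * Real.Gamma (k / 2) = 2 * Real.pi ^ ((k : ℝ) / 2) :=
  div_mul_cancel₀ _ (Real.Gamma_pos_of_pos (by positivity)).ne'

lemma C1_eq_bracketIntegral (n : ℕ) (s L C : ℝ) :
    C1 n s L C = bracketIntegral 1 (n + 2 * s) * (mu1 s L C * surfOmega (n - 1) / 2) := by
  rw [C1, bracketIntegral, Nat.cast_one, ← Real.sqrt_eq_rpow]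
  congr 4 <;> ring

lemma C2_eq_bracketIntegral (hn : 2 ≤ n) (s : ℝ) :
    C2 n s = bracketIntegral (n - 1) (n + 2 * s) := by
  have h_cast : ((n - 1 : ℕ) : ℝ) = n - 1 := Nat.cast_pred (by omega)
  rw [C2, bracketIntegral, ← h_cast, surfOmega_mul_Gamma_half (by omega), h_cast,
    show (n + 2 * s - (n - 1)) / 2 = s + 1 / 2 by ring, show (n + 2 * s) / 2 = n / 2 + s by ring,
    mul_assoc, mul_div_mul_left _ _ two_ne_zero]

lemma C1_pos (hn : 2 ≤ n) (hs : 1 / 2 < s) (hL : 0 < L) (hC : 0 < C) : 0 < C1 n s L C := by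
  have h_bracket : 0 < bracketIntegral 1 (n + 2 * s) := bracketIntegral_pos (by
    rw [Nat.cast_one]
    linarith [n.cast_nonneg (α := ℝ)])
  have h_surface : 0 < surfOmega (n - 1) := surfOmega_pos (by omega)
  have h_mu1 := mu1_pos hs hL hC
  rw [C1_eq_bracketIntegral]
  positivity

lemma C2_pos (hn : 2 ≤ n) (hs : 0 < s) : 0 < C2 n s := by
  rw [C2_eq_bracketIntegral hn]
  refine bracketIntegral_pos ?_
  rw [Nat.cast_pred (by omega)]
  linarith

lemma mu0_eq_div (hn : 1 ≤ n) (hC1 : 0 < C1 n s L C) :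
    mu0 n s L C η₀ = (η₀ / 2 / C1 n s L C) ^ (n - 1) * (η₀ / 2) / C2 n s := by
  rw [mu0, Real.rpow_natCast, ← neg_sub, ← Nat.cast_pred hn, Real.rpow_neg hC1.le,
    Real.rpow_natCast, ← pow_sub_one_mul (Nat.one_le_iff_ne_zero.mp hn) (η₀ / 2),
    div_pow _ (C1 n s L C)]
  ring

/-- The stretch factor `κ` is chosen so that the error term `κ^(2s) C₁` is half of `η₀`. -/
lemma mu0_le_of_forall_stretch (hn : 2 ≤ n) (hs : 1 / 2 < s) (hL : 0 < L) (hC : 0 < C)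
    (hη : 0 < η₀) {J : ℝ}
    (hJ : ∀ κ l : ℝ, 0 < κ → 0 < l → l * κ ^ (n - 1) = 1 →
      η₀ ≤ l ^ (2 * s) * C2 n s * J + κ ^ (2 * s) * C1 n s L C) :
    mu0 n s L C η₀ ≤ J := by
  have hC1 := C1_pos hn hs hL hC
  have hC2 : 0 < C2 n s := C2_pos hn (by linarith)
  set X := η₀ / 2 / C1 n s L C with hX
  have hX_pos : 0 < X := by positivity
  set κ := X ^ (2 * s)⁻¹
  have hκ : 0 < κ := by positivity
  have hκ_rpow : κ ^ (2 * s) = X := Real.rpow_inv_rpow hX_pos.le (by linarith)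
  have hl_rpow : (κ ^ (n - 1))⁻¹ ^ (2 * s) = (X ^ (n - 1))⁻¹ := by
    rw [Real.inv_rpow (by positivity), ← Real.rpow_pow_comm hκ.le, hκ_rpow]
  have h_test := hJ κ (κ ^ (n - 1))⁻¹ hκ (by positivity) (inv_mul_cancel₀ (by positivity))
  rw [hκ_rpow, hl_rpow, hX, div_mul_cancel₀ _ hC1.ne', ← hX] at h_test
  have h_main : η₀ / 2 ≤ (X ^ (n - 1))⁻¹ * (C2 n s * J) := by linarith
  rw [mu0_eq_div (by omega) hC1, ← hX, div_le_iff₀' hC2]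
  exact (le_inv_mul_iff₀ (by positivity)).mp h_main

end Constants

section AxialOperator

variable {n : ℕ} {s L C κ l : ℝ} {u : EuclideanSpace ℝ (Fin n) → ℝ}
  {x e : EuclideanSpace ℝ (Fin n)}

/-- The one-dimensional operator `(1/2) ∫ δ(u,x,te)/|t|^(1+2s) dt` along the direction `e`. -/
noncomputable def axialOperator (s : ℝ) (u : EuclideanSpace ℝ (Fin n) → ℝ)
    (x e : EuclideanSpace ℝ (Fin n)) : ℝ :=
  1 / 2 * ∫ t : ℝ, delta2 u x (t • e) / |t| ^ (1 + 2 * s)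

lemma delta2_smul_div_abs_rpow (s : ℝ) (u : EuclideanSpace ℝ (Fin n) → ℝ)
    (x e : EuclideanSpace ℝ (Fin n)) (t : ℝ) :
    delta2 u x (t • e) / |t| ^ (1 + 2 * s) = delta2 u x (t • e) * ‖t‖ ^ (-(1 + 2 * s)) := by
  rw [Real.rpow_neg (norm_nonneg t), div_eq_mul_inv, Real.norm_eq_abs]

lemma delta2_smul_le_incrementBound (hδ : ∀ a b, delta2 u a b ≤ incrementBound L C ‖b‖)
    (he : ‖e‖ = 1) (t : ℝ) : delta2 u x (t • e) ≤ incrementBound L C ‖t‖ := by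
  simpa only [norm_smul, he, mul_one] using hδ x (t • e)

lemma axialOperator_le_mu1 (hs : 1 / 2 < s) (hs1 : s < 1) (hL : 0 < L) (hC : 0 < C)
    (hδ : ∀ a b, delta2 u a b ≤ incrementBound L C ‖b‖) (he : ‖e‖ = 1)
    (h_int : Integrable fun t : ℝ => delta2 u x (t • e) / |t| ^ (1 + 2 * s)) :
    (1 - s) * axialOperator s u x e ≤ mu1 s L C := by
  have hs1' : 0 < 1 - s := sub_pos.mpr hs1
  have h_bound_int := integrable_incrementBound_norm ℝ hs hs1 hL hC
  have h_bound := integral_incrementBound_norm ℝ hs hs1 hL hC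
  rw [Module.finrank_self, Nat.cast_one] at h_bound_int h_bound
  rw [surfOmega_one] at h_bound
  have h_le : ∫ t : ℝ, delta2 u x (t • e) / |t| ^ (1 + 2 * s) ≤ 2 * (mu1 s L C / (1 - s)) := by
    rw [← h_bound]
    refine integral_mono h_int h_bound_int fun t => ?_
    rw [delta2_smul_div_abs_rpow]
    gcongr
    exact delta2_smul_le_incrementBound hδ he t
  calc (1 - s) * axialOperator s u x e ≤ (1 - s) * (1 / 2 * (2 * (mu1 s L C / (1 - s)))) := by
        unfold axialOperator
        gcongr
    _ = mu1 s L C := by field_simp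

lemma kernelA_axialStretch (s : ℝ) (u : EuclideanSpace ℝ (Fin n) → ℝ)
    (x : EuclideanSpace ℝ (Fin n)) (he : ‖e‖ = 1) (hκ : κ ≠ 0) (hl : l ≠ 0)
    (p : ℝ × (ℝ ∙ e)ᗮ) :
    kernelA s (axialStretch κ l e) u x (axisProdOrthogonal e he p) =
      delta2 u x (axisProdOrthogonal e he p) * ellipsoidalKernel l κ (n + 2 * s) p := by
  have h_orth : inner ℝ e (p.2 : EuclideanSpace ℝ (Fin n)) = 0 :=
    Submodule.mem_orthogonal_singleton_iff_inner_right.mp p.2.2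
  rw [kernelA, div_eq_mul_inv, ellipsoidalKernel, Submodule.coe_norm p.2,
    ← norm_sq_inv_axialStretch_mulVec he h_orth hκ hl, ← axisProdOrthogonal_apply he,
    ← Real.rpow_natCast_mul (norm_nonneg _), Nat.cast_ofNat, mul_div_cancel₀ _ two_ne_zero,
    Real.rpow_neg (norm_nonneg _)]

lemma integrable_and_integral_kernelA_axialStretch_le (hn : 2 ≤ n) (hs : 1 / 2 < s) (hs1 : s < 1)
    (hL : 0 < L) (hC : 0 < C) (hu : Continuous u)
    (hδ : ∀ a b, delta2 u a b ≤ incrementBound L C ‖b‖) (he : ‖e‖ = 1) (hκ : 0 < κ) (hl : 0 < l)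
    (h_int : Integrable fun y => kernelA s (axialStretch κ l e) u x y) :
    Integrable (fun t : ℝ => delta2 u x (t • e) / |t| ^ (1 + 2 * s)) ∧
      ∫ y, kernelA s (axialStretch κ l e) u x y ≤
        l ^ (1 + 2 * s) * κ ^ (n - 1) * C2 n s *
            (∫ t : ℝ, delta2 u x (t • e) / |t| ^ (1 + 2 * s)) +
          κ ^ (n + 2 * s - 1) * l * (2 * C1 n s L C / (1 - s)) := by
  have h_dim := finrank_orthogonal_span_unit he
  rw [finrank_euclideanSpace_fin] at h_dim
  have hr : n + 2 * s = Module.finrank ℝ (ℝ ∙ e)ᗮ + 1 + 2 * s := by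
    rw [h_dim, Nat.cast_pred (by omega), sub_add_cancel]
  have : Nontrivial (ℝ ∙ e)ᗮ := Module.nontrivial_of_finrank_pos (R := ℝ) (by omega)
  have h_split := measurePreserving_axisProdOrthogonal he
  have h_emb := (axisProdOrthogonal e he).measurableEmbedding
  have h_int_split : Integrable fun p : ℝ × (ℝ ∙ e)ᗮ =>
      delta2 u x (axisProdOrthogonal e he p) * ellipsoidalKernel l κ (n + 2 * s) p := by
    simpa only [Function.comp_def, kernelA_axialStretch s u x he hκ.ne' hl.ne'] using
      (h_split.integrable_comp_emb h_emb).mpr h_int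
  have h_average (t : ℝ) (z : (ℝ ∙ e)ᗮ) :
      (delta2 u x (axisProdOrthogonal e he (t, z)) +
        delta2 u x (axisProdOrthogonal e he (t, -z))) / 2 ≤
      delta2 u x (t • e) + incrementBound L C ‖z‖ := by
    simpa only [axisProdOrthogonal_apply, Submodule.coe_neg, ← sub_eq_add_neg,
      Submodule.coe_norm] using delta2_average_le hδ x (t • e) z
  have h_slice := integrable_and_integral_le_of_slice_average_le hs hs1 hL hC hκ hl hr
    h_int_split (g := fun t => delta2 u x (t • e)) (by unfold delta2; fun_prop)
    (delta2_smul_le_incrementBound hδ he) h_average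
  simp only [← delta2_smul_div_abs_rpow, ← kernelA_axialStretch s u x he hκ.ne' hl.ne', h_dim,
    h_split.integral_comp h_emb (kernelA s (axialStretch κ l e) u x)] at h_slice
  rw [C2_eq_bracketIntegral hn, C1_eq_bracketIntegral]
  convert h_slice using 3
  ring

lemma mul_LA_axialStretch_le (hn : 2 ≤ n) (hs : 1 / 2 < s) (hs1 : s < 1)
    (hL : 0 < L) (hC : 0 < C) (hu : Continuous u)
    (hδ : ∀ a b, delta2 u a b ≤ incrementBound L C ‖b‖) (he : ‖e‖ = 1) (hκ : 0 < κ) (hl : 0 < l)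
    (hκl : l * κ ^ (n - 1) = 1)
    (h_int : Integrable fun y => kernelA s (axialStretch κ l e) u x y) :
    (1 - s) * LA s (axialStretch κ l e) u x ≤
      l ^ (2 * s) * C2 n s * ((1 - s) * axialOperator s u x e) + κ ^ (2 * s) * C1 n s L C := by
  have hs1' : 0 < 1 - s := sub_pos.mpr hs1
  have hl_pow : l ^ (1 + 2 * s) * κ ^ (n - 1) = l ^ (2 * s) := by
    rw [Real.rpow_add hl, Real.rpow_one, mul_right_comm, hκl, one_mul]
  have hκ_pow : κ ^ (n + 2 * s - 1) * l = κ ^ (2 * s) := by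
    rw [add_sub_right_comm, ← Nat.cast_pred (by omega), Real.rpow_add hκ, Real.rpow_natCast,
      mul_comm, ← mul_assoc, hκl, one_mul]
  have h_le := (integrable_and_integral_kernelA_axialStretch_le hn hs hs1 hL hC hu hδ he hκ hl
    h_int).2
  rw [hl_pow, hκ_pow] at h_le
  calc (1 - s) * LA s (axialStretch κ l e) u x
      ≤ (1 - s) * (1 / 2 * (l ^ (2 * s) * C2 n s *
          (∫ t : ℝ, delta2 u x (t • e) / |t| ^ (1 + 2 * s)) +
            κ ^ (2 * s) * (2 * C1 n s L C / (1 - s)))) := by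
        unfold LA
        gcongr
    _ = _ := by
        unfold axialOperator
        field_simp

end AxialOperator

theorem stmt1 (n : ℕ) (hn : 2 ≤ n) (s L C η₀ : ℝ)
    (hs : 1 / 2 < s) (hs1 : s < 1) (hL : 0 < L) (hC : 0 < C) (hη : 0 < η₀)
    (u : EuclideanSpace ℝ (Fin n) → ℝ)
    (hLip : ∀ a b : EuclideanSpace ℝ (Fin n), |u a - u b| ≤ L * ‖a - b‖)
    (hSC : ∀ a b : EuclideanSpace ℝ (Fin n), delta2 u a b ≤ C * ‖b‖ ^ 2)
    (x : EuclideanSpace ℝ (Fin n))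
    (hEll : ∀ A : Matrix (Fin n) (Fin n) ℝ, A.PosDef → A.det = 1 →
      Integrable (fun y => kernelA s A u x y) ∧ η₀ ≤ (1 - s) * LA s A u x) :
    ∀ e : EuclideanSpace ℝ (Fin n), ‖e‖ = 1 →
      Integrable (fun t : ℝ => delta2 u x (t • e) / |t| ^ (1 + 2 * s)) ∧
      mu0 n s L C η₀ ≤ (1 - s) * (1 / 2 * ∫ t : ℝ, delta2 u x (t • e) / |t| ^ (1 + 2 * s)) ∧
      (1 - s) * (1 / 2 * ∫ t : ℝ, delta2 u x (t • e) / |t| ^ (1 + 2 * s)) ≤ mu1 s L C := by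
  intro e he
  have hu := continuous_of_abs_sub_le hLip
  have hδ := delta2_le_incrementBound hLip hSC
  have h_unit := dotProduct_self_of_norm_eq_one he
  have h_test (κ l : ℝ) (hκ : 0 < κ) (hl : 0 < l) (hκl : l * κ ^ (n - 1) = 1) :=
    hEll (axialStretch κ l e) (posDef_axialStretch h_unit hκ hl)
      (by rw [det_axialStretch h_unit hκ.ne', Fintype.card_fin, hκl])
  have h_int := (integrable_and_integral_kernelA_axialStretch_le hn hs hs1 hL hC hu hδ he
    one_pos one_pos (h_test 1 1 one_pos one_pos (by simp)).1).1
  refine ⟨h_int, ?_, axialOperator_le_mu1 hs hs1 hL hC hδ he h_int⟩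
  refine mu0_le_of_forall_stretch hn hs hL hC hη fun κ l hκ hl hκl => ?_
  obtain ⟨h_kernel, h_ell⟩ := h_test κ l hκ hl hκl
  exact h_ell.trans (mul_LA_axialStretch_le hn hs hs1 hL hC hu hδ he hκ hl hκl h_kernel)
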